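/- Let n ≥ 2 be an integer and 0 < λ ≤ Λ real constants. Set σ := 1 − (λ/(λ+(n−1)Λ))^n · (1/(4√n))^n and M := 884736·n³·(36n)^{max{1, (n−1)Λ/λ − 1}}. Let Ω ⊆ ℝⁿ be an open set containing the closed ball of radius 2√n centered at 0, and let v : Ω → ℝ be a continuous viscosity supersolution of M⁻_{λ,Λ}(D²v) ≤ 0 in Ω. If G⁻₁(v,Ω) ∩ Q₃ ≠ ∅, then |G⁻_M(v,Ω) ∩ Q₁| ≥ (1−σ)·|Q₁|. -/

import Mathlib

open MeasureTheory Metric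
open scoped InnerProductSpace ENNReal

noncomputable section

abbrev Euc (n : ℕ) := EuclideanSpace ℝ (Fin n)

/-- Loewner order -/
def matLE {n : ℕ} (A B : Matrix (Fin n) (Fin n) ℝ) : Prop := (B - A).PosSemidef

/-- Pucci minimal operator -/
def pucciInf {n : ℕ} (lam Lam : ℝ) (M : Matrix (Fin n) (Fin n) ℝ) : ℝ :=
  sInf {t : ℝ | ∃ A : Matrix (Fin n) (Fin n) ℝ,
    A.IsSymm ∧ matLE (lam • 1) A ∧ matLE A (Lam • 1) ∧ t = (A * M).trace}

/-- Hessian matrix via second iterated Fréchet derivative -/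
def hessianMatrix {n : ℕ} (φ : Euc n → ℝ) (x : Euc n) : Matrix (Fin n) (Fin n) ℝ :=
  Matrix.of fun i j =>
    iteratedFDeriv ℝ 2 φ x ![EuclideanSpace.single i 1, EuclideanSpace.single j 1]

/-- viscosity supersolution of M⁻(D²v) ≤ 0 -/
def ViscSupersol {n : ℕ} (lam Lam : ℝ) (Ω : Set (Euc n)) (v : Euc n → ℝ) : Prop :=
  ∀ x₀ ∈ Ω, ∀ φ : Euc n → ℝ,
    (∃ U : Set (Euc n), IsOpen U ∧ x₀ ∈ U ∧ ContDiffOn ℝ 2 φ U) →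
    IsLocalMinOn (fun x => v x - φ x) Ω x₀ →
    pucciInf lam Lam (hessianMatrix φ x₀) ≤ 0

def Gm {n : ℕ} (K : ℝ) (v : Euc n → ℝ) (Ω : Set (Euc n)) : Set (Euc n) :=
  {xb | xb ∈ Ω ∧ ∃ p : Euc n, ∀ x ∈ Ω, v x ≥ v xb + ⟪p, x - xb⟫_ℝ - K / 2 * ‖x - xb‖ ^ 2}

def Am {n : ℕ} (K : ℝ) (v : Euc n → ℝ) (Ω : Set (Euc n)) : Set (Euc n) := Ω \ Gm K v Ω

/-- open cube of side r centered at x -/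
def cube {n : ℕ} (r : ℝ) (x : Euc n) : Set (Euc n) := {y | ∀ i, |y i - x i| < r / 2}

/-!
Adding `(M / 2) |·|²` to `v` turns contact from below with a paraboloid of opening `M` into
existence of a subgradient. Tested against a paraboloid with Hessian `a e ⊗ e - b I`, the Pucci
inequality says `a ≤ k b` with `k = (λ + (n - 1) Λ) / λ`, a one-sided bound which makes the
subgradient a locally Lipschitz function of the contact point, with constant `17/16 k M`. Hence a
set of slopes has measure at most `(17/16 k M)ⁿ` times that of the points at which they are
attained.

It remains to find a ball of slopes attained near the origin. Let `q₀` be a subgradient of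
`v + |·|² / 2` at the given point of `Q₃`. Comparison with the barrier `|x|^(-2γ)` yields a
point `z` with `|z| ≤ 1/4` at which this function exceeds its supporting affine function by at most
`H = 18 n (36 n)^γ`. If `M - 1 > 40 H`, every slope within `9/64 (M - 1)` of `q₀ + (M - 1) z / 2`
is attained by `v + (M / 2) |·|²` in the ball of radius `1/2`. Rescaling by `17/16 k M`, the contact
set is at least as large as a ball of radius `1 / (8 k)`, which contains a cube of side
`1 / (4 k √n)`.
-/

section Minima

lemma exists_isMinOn_mem_of_lowerSemicontinuousOn {X : Type*} [TopologicalSpace X] {f : X → ℝ}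
    {s t : Set X} {z : X} (ht : IsCompact t) (hf : LowerSemicontinuousOn f t) (hz : z ∈ t)
    (hfz : ∀ y ∈ t \ s, f z < f y) : ∃ x ∈ s, IsMinOn f t x := by
  obtain ⟨x, hxt, hx⟩ := hf.exists_isMinOn ⟨z, hz⟩ ht
  exact ⟨x, by_contra fun hxs => (hfz x ⟨hxt, hxs⟩).not_ge (hx hz), hx⟩

end Minima

section Paraboloids

variable {E : Type*} [NormedAddCommGroup E] [InnerProductSpace ℝ E]

/-- The quadratic polynomial with value `0` and gradient `p` at `c`, and with constant Hessian
`a e ⊗ e - b I`. These are the only test functions used against a supersolution. -/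
def paraboloid (c p e : E) (a b : ℝ) (x : E) : ℝ :=
  ⟪p, x - c⟫_ℝ + a / 2 * ⟪e, x - c⟫_ℝ ^ 2 - b / 2 * ‖x - c‖ ^ 2

@[simp]
lemma paraboloid_self (c p e : E) (a b : ℝ) : paraboloid c p e a b c = 0 := by
  simp [paraboloid]

lemma contDiff_paraboloid {m : WithTop ℕ∞} (c p e : E) (a b : ℝ) :
    ContDiff ℝ m (paraboloid c p e a b) := by
  unfold paraboloid
  have hsub : ContDiff ℝ m fun x : E => x - c := contDiff_id.sub contDiff_const
  exact ((contDiff_const.inner ℝ hsub).add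
    (contDiff_const.mul ((contDiff_const.inner ℝ hsub).pow 2))).sub
    (contDiff_const.mul (hsub.norm_sq ℝ))

lemma continuous_paraboloid (c p e : E) (a b : ℝ) : Continuous (paraboloid c p e a b) :=
  (contDiff_paraboloid (m := 0) c p e a b).continuous

lemma hasFDerivAt_inner_sub (q c x : E) :
    HasFDerivAt (fun y => ⟪q, y - c⟫_ℝ) (innerSL ℝ q) x :=
  (innerSL ℝ q).hasFDerivAt.comp x ((hasFDerivAt_id x).sub_const c)

lemma fderiv_paraboloid (c p e : E) (a b : ℝ) :
    fderiv ℝ (paraboloid c p e a b) = fun x =>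
      innerSL ℝ p + (a * ⟪e, x - c⟫_ℝ) • innerSL ℝ e - b • innerSL ℝ (x - c) := by
  funext x
  refine HasFDerivAt.fderiv (HasFDerivAt.congr_fderiv
    (((hasFDerivAt_inner_sub p c x).add
      (((hasFDerivAt_inner_sub e c x).pow 2).const_mul (a / 2))).sub
      (((hasFDerivAt_id x).sub_const c).norm_sq.const_mul (b / 2))) ?_)
  ext y
  simp
  ring

lemma fderiv_fderiv_paraboloid_apply (c p e : E) (a b : ℝ) (x y z : E) :
    fderiv ℝ (fderiv ℝ (paraboloid c p e a b)) x y z =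
      a * ⟪e, y⟫_ℝ * ⟪e, z⟫_ℝ - b * ⟪y, z⟫_ℝ := by
  rw [fderiv_paraboloid]
  have hquad := ((hasFDerivAt_inner_sub e c x).const_mul a).smul_const (innerSL ℝ e)
  have hlin : HasFDerivAt (fun y : E => innerSL ℝ (y - c)) (innerSL ℝ : E →L[ℝ] _) x :=
    (innerSL ℝ : E →L[ℝ] _).hasFDerivAt.comp x ((hasFDerivAt_id x).sub_const c)
  have h : HasFDerivAt (fun y => innerSL ℝ p + (a * ⟪e, y - c⟫_ℝ) • innerSL ℝ e -
      b • innerSL ℝ (y - c)) _ x := (hquad.const_add (innerSL ℝ p)).sub (hlin.const_smul b)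
  rw [h.fderiv]
  simp [innerSL_apply_apply ℝ y z, mul_assoc]

lemma hessianMatrix_paraboloid {n : ℕ} (c p e : Euc n) (a b : ℝ) (x : Euc n) :
    hessianMatrix (paraboloid c p e a b) x =
      a • Matrix.vecMulVec e e - b • (1 : Matrix (Fin n) (Fin n) ℝ) := by
  ext i j
  rw [hessianMatrix, Matrix.of_apply, iteratedFDeriv_two_apply]
  simp [fderiv_fderiv_paraboloid_apply, Matrix.vecMulVec_apply, Matrix.one_apply,
    EuclideanSpace.inner_single_right, mul_assoc, eq_comm]

end Paraboloids

section Pucci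

open Matrix

variable {n : ℕ} {lam Lam a b : ℝ} {A : Matrix (Fin n) (Fin n) ℝ} {e : Fin n → ℝ}

lemma dotProduct_mulVec_le_trace {ι : Type*} [Fintype ι] {B : Matrix ι ι ℝ} {e : ι → ℝ}
    (hB : B.PosSemidef) (he : e ⬝ᵥ e = 1) : e ⬝ᵥ B *ᵥ e ≤ B.trace := by
  obtain ⟨m, w, rfl⟩ := (posSemidef_iff_eq_sum_vecMulVec (𝕜 := ℝ)).mp hB
  rw [sum_mulVec, dotProduct_sum, trace_sum]
  refine Finset.sum_le_sum fun i _ => ?_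
  have cauchy_schwarz := Finset.sum_mul_sq_le_sq_mul_sq Finset.univ (w i) e
  simp only [dotProduct, ← sq] at he
  rw [he, mul_one] at cauchy_schwarz
  calc e ⬝ᵥ vecMulVec (w i) (star (w i)) *ᵥ e = (w i ⬝ᵥ e) ^ 2 := by
        simp [vecMulVec_mulVec, dotProduct_comm e, sq]
    _ ≤ w i ⬝ᵥ w i := by simpa only [dotProduct, ← sq] using cauchy_schwarz
    _ = (vecMulVec (w i) (star (w i))).trace := by simp [trace_vecMulVec]

lemma le_dotProduct_mulVec_of_matLE (hA : matLE (lam • 1) A) (he : e ⬝ᵥ e = 1) :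
    lam ≤ e ⬝ᵥ A *ᵥ e := by
  simpa [sub_mulVec, smul_mulVec, he] using hA.dotProduct_mulVec_nonneg e

lemma trace_le_of_matLE (hA : matLE A (Lam • 1)) (he : e ⬝ᵥ e = 1) :
    A.trace ≤ e ⬝ᵥ A *ᵥ e + ((n : ℝ) - 1) * Lam := by
  have h := dotProduct_mulVec_le_trace hA he
  simp only [sub_mulVec, dotProduct_sub, smul_mulVec, one_mulVec, dotProduct_smul, he, trace_sub,
    trace_smul, trace_one, Fintype.card_fin, smul_eq_mul, mul_one] at h
  linarith

lemma trace_mul_smul_vecMulVec_sub (A : Matrix (Fin n) (Fin n) ℝ) (e : Fin n → ℝ) (a b : ℝ) :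
    (A * (a • vecMulVec e e - b • 1)).trace = a * (e ⬝ᵥ A *ᵥ e) - b * A.trace := by
  simp [mul_sub, mul_vecMulVec, trace_vecMulVec, dotProduct_comm e]

lemma le_pucciInf (hLam : lam ≤ Lam) (he : e ⬝ᵥ e = 1) (hb : 0 ≤ b) (hab : b ≤ a) :
    (a - b) * lam - b * (((n : ℝ) - 1) * Lam) ≤
      pucciInf lam Lam (a • vecMulVec e e - b • (1 : Matrix (Fin n) (Fin n) ℝ)) := by
  refine le_csInf ⟨_, lam • 1, by simp [IsSymm], by simp [matLE, PosSemidef.zero], ?_, rfl⟩ ?_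
  · rw [matLE, ← sub_smul]
    exact PosSemidef.one.smul (sub_nonneg.mpr hLam)
  · rintro _ ⟨A, -, hlow, hupp, rfl⟩
    have h₁ := mul_le_mul_of_nonneg_left (le_dotProduct_mulVec_of_matLE hlow he)
      (sub_nonneg.mpr hab)
    have h₂ := mul_le_mul_of_nonneg_left (trace_le_of_matLE hupp he) hb
    rw [trace_mul_smul_vecMulVec_sub]
    linarith

end Pucci

section Supersolutions

variable {E : Type*} [NormedAddCommGroup E] {Ω : Set E} {v : E → ℝ} {k M a b : ℝ} {c p e x₀ : E}

/-- The function `v + (M / 2) |·|²`, in terms of which `Gm M v Ω` is the set of points of `Ω` where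
a subgradient exists. -/
def convexShift (M : ℝ) (v : E → ℝ) (x : E) : ℝ := v x + M / 2 * ‖x‖ ^ 2

lemma convexShift_convexShift (M K : ℝ) (v : E → ℝ) :
    convexShift K (convexShift M v) = convexShift (M + K) v := by
  funext x
  simp only [convexShift]
  ring

lemma lowerSemicontinuousOn_convexShift (hv : LowerSemicontinuousOn v Ω) (M : ℝ) :
    LowerSemicontinuousOn (convexShift M v) Ω :=
  hv.add (Continuous.continuousOn (by fun_prop)).lowerSemicontinuousOn

variable [InnerProductSpace ℝ E]

/-- Supersolutions tested against paraboloids only: a paraboloid with Hessian `a e ⊗ e - b I` that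
touches `v` from below satisfies `a ≤ k b`. For `k = (λ + (n - 1) Λ) / λ` this is all that the
argument needs of the Pucci inequality. -/
def ParaboloidSupersol (k : ℝ) (Ω : Set E) (v : E → ℝ) : Prop :=
  ∀ x₀ ∈ Ω, ∀ c p e : E, ∀ a b : ℝ, ‖e‖ = 1 → 0 ≤ b →
    IsLocalMin (fun x => v x - paraboloid c p e a b x) x₀ → a ≤ k * b

/-- `q` is a subgradient of `u` at `x` relative to `Ω`: the affine function of slope `q` through
`(x, u x)` lies below `u` on all of `Ω`. -/
def IsSubgradientOn (u : E → ℝ) (Ω : Set E) (x q : E) : Prop :=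
  ∀ y ∈ Ω, u x + ⟪q, y - x⟫_ℝ ≤ u y

lemma lowerSemicontinuousOn_sub_of_continuousOn {X : Type*} [TopologicalSpace X] {f g : X → ℝ}
    {s : Set X} (hf : LowerSemicontinuousOn f s) (hg : ContinuousOn g s) :
    LowerSemicontinuousOn (fun x => f x - g x) s := by
  simp only [sub_eq_add_neg]
  exact hf.add hg.neg.lowerSemicontinuousOn

lemma half_norm_sq_eq (M : ℝ) (c x : E) :
    M / 2 * ‖x‖ ^ 2 = M / 2 * ‖c‖ ^ 2 + ⟪M • c, x - c⟫_ℝ + M / 2 * ‖x - c‖ ^ 2 := by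
  have h := norm_add_sq_real c (x - c)
  rw [add_sub_cancel] at h
  rw [h, real_inner_smul_left]
  ring

lemma convexShift_sub_paraboloid (M : ℝ) (v : E → ℝ) (c p e : E) (a b : ℝ) (x : E) :
    convexShift M v x - paraboloid c p e a b x =
      v x - paraboloid c (p - M • c) e a (b + M) x + M / 2 * ‖c‖ ^ 2 := by
  rw [convexShift, half_norm_sq_eq M c, paraboloid, paraboloid, inner_sub_left]
  ring

lemma ParaboloidSupersol.le_of_isLocalMin_convexShift_sub (hv : ParaboloidSupersol k Ω v)
    (hx₀ : x₀ ∈ Ω) (he : ‖e‖ = 1) (hb : 0 ≤ b + M)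
    (hmin : IsLocalMin (fun x => convexShift M v x - paraboloid c p e a b x) x₀) :
    a ≤ k * (b + M) := by
  refine hv x₀ hx₀ c (p - M • c) e a (b + M) he hb ?_
  simpa only [IsLocalMin, IsMinFilter, convexShift_sub_paraboloid, add_le_add_iff_right] using hmin

theorem ViscSupersol.paraboloidSupersol {n : ℕ} (hn : n ≠ 0) {lam Lam : ℝ} (hlam : 0 < lam)
    (hLam : lam ≤ Lam) {Ω : Set (Euc n)} {v : Euc n → ℝ} (hv : ViscSupersol lam Lam Ω v) :
    ParaboloidSupersol ((lam + ((n : ℝ) - 1) * Lam) / lam) Ω v := by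
  intro x₀ hx₀ c p e a b he hb hmin
  have hn' : (1 : ℝ) ≤ n := mod_cast Nat.one_le_iff_ne_zero.mpr hn
  have hLam0 : 0 ≤ ((n : ℝ) - 1) * Lam * b :=
    mul_nonneg (mul_nonneg (by linarith) (hlam.le.trans hLam)) hb
  rw [div_mul_eq_mul_div, le_div_iff₀ hlam]
  rcases lt_or_ge a b with hab | hab
  · nlinarith
  · have hee : (e : Fin n → ℝ) ⬝ᵥ e = 1 := by
      simpa [he, dotProduct, sq] using (EuclideanSpace.real_norm_sq_eq e).symm
    have htest := hv x₀ hx₀ _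
      ⟨Set.univ, isOpen_univ, trivial, (contDiff_paraboloid c p e a b).contDiffOn⟩ (hmin.on Ω)
    rw [hessianMatrix_paraboloid] at htest
    linarith [le_pucciInf hLam hee hb hab]

lemma isSubgradientOn_convexShift_iff {x q : E} :
    IsSubgradientOn (convexShift M v) Ω x q ↔
      ∀ y ∈ Ω, v x + ⟪q - M • x, y - x⟫_ℝ - M / 2 * ‖y - x‖ ^ 2 ≤ v y := by
  refine forall₂_congr fun y _ => ?_
  rw [convexShift, convexShift, half_norm_sq_eq M x y, inner_sub_left]
  constructor <;> intro h <;> linarith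

lemma mem_Gm_iff {n : ℕ} {Ω : Set (Euc n)} {v : Euc n → ℝ} {x : Euc n} :
    x ∈ Gm M v Ω ↔ x ∈ Ω ∧ ∃ q, IsSubgradientOn (convexShift M v) Ω x q := by
  simp only [isSubgradientOn_convexShift_iff]
  exact and_congr_right fun _ => (Equiv.subRight (M • x)).surjective.exists

end Supersolutions

section SubgradientEstimate

variable {E : Type*} [NormedAddCommGroup E] [InnerProductSpace ℝ E] {Ω : Set E} {v : E → ℝ}
  {k M r ρ m : ℝ}

lemma tilted_quadratic_lt {s N a : ℝ} (hk : 0 < k) (hM : 0 < M) (hr : 0 < r) (hρ : 0 < ρ)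
    (ha : a = 33 / 32 * (k * M)) (hρr : 100 * k * ρ ^ 2 < r ^ 2) (hm : 17 / 16 * k * M * ρ ≤ m)
    (hs : s ∈ Set.Icc (-(ρ / 50)) ρ) (hsN : |s| ≤ N)
    (hbdry : r ≤ N ∨ s ∉ Set.Ioo (-(ρ / 50)) ρ) :
    a * ρ / 100 * s + a / 2 * s ^ 2 < M / 128 * N ^ 2 + max 0 (m * (s - ρ / 2)) := by
  have hkMρ : 0 < k * M * ρ ^ 2 := by positivity
  have ha0 : 0 < a := by rw [ha]; positivity
  have haρ : a * ρ ^ 2 = 33 / 32 * (k * M * ρ ^ 2) := by rw [ha]; ring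
  have hcases : r ≤ N ∨ s = -(ρ / 50) ∨ s = ρ := hbdry.imp_right fun h => by
    rcases hs.1.eq_or_lt with h₁ | h₁
    · exact Or.inl h₁.symm
    · exact Or.inr (hs.2.eq_or_lt.resolve_right fun h₂ => h ⟨h₁, h₂⟩)
  rcases hcases with hN | rfl | rfl
  · have hs2 : s ^ 2 ≤ ρ ^ 2 := sq_le_sq' (by linarith [hs.1]) hs.2
    have hquad : a / 2 * s ^ 2 ≤ a / 2 * ρ ^ 2 := by gcongr
    have hlin : a * ρ / 100 * s ≤ a * ρ / 100 * ρ := by gcongr; exact hs.2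
    have hMr : M * (100 * k * ρ ^ 2) < M * N ^ 2 := by
      gcongr
      exact hρr.trans_le (by gcongr)
    linarith [le_max_left 0 (m * (s - ρ / 2))]
  · have hN : 0 < N := (abs_pos.mpr (by linarith)).trans_le hsN
    have hN2 : 0 < M / 128 * N ^ 2 := by positivity
    linarith [le_max_left 0 (m * (-(ρ / 50) - ρ / 2))]
  · have hms : 17 / 16 * k * M * s * (s / 2) ≤ m * (s / 2) := by gcongr
    have hN2 : 0 ≤ M / 128 * N ^ 2 := by positivity
    linarith [le_max_right 0 (m * (s - s / 2))]

lemma lt_sub_tilted_paraboloid {u : E → ℝ} {a : ℝ} {x₁ q e y : E} (hk : 0 < k) (hM : 0 < M)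
    (hr : 0 < r) (hρ : 0 < ρ) (ha : a = 33 / 32 * (k * M)) (hρr : 100 * k * ρ ^ 2 < r ^ 2)
    (hm : 17 / 16 * k * M * ρ ≤ m) (he : ‖e‖ = 1)
    (hs : ⟪e, y - x₁⟫_ℝ ∈ Set.Icc (-(ρ / 50)) ρ)
    (hbdry : r ≤ ‖y - x₁‖ ∨ ⟪e, y - x₁⟫_ℝ ∉ Set.Ioo (-(ρ / 50)) ρ)
    (hq : u x₁ + ⟪q, y - x₁⟫_ℝ ≤ u y)
    (hqm : u x₁ + ⟪q, y - x₁⟫_ℝ + m * (⟪e, y - x₁⟫_ℝ - ρ / 2) ≤ u y) :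
    u x₁ < u y - paraboloid x₁ (q + (a * ρ / 100) • e) e a (M / 64) y := by
  have hcs := abs_real_inner_le_norm e (y - x₁)
  rw [he, one_mul] at hcs
  have hlt := tilted_quadratic_lt hk hM hr hρ ha hρr hm hs hcs hbdry
  have hmax : max 0 (m * (⟪e, y - x₁⟫_ℝ - ρ / 2)) ≤ u y - u x₁ - ⟪q, y - x₁⟫_ℝ :=
    max_le (by linarith) (by linarith)
  rw [paraboloid, inner_add_left, real_inner_smul_left]
  linarith

-- Were `m` larger, a paraboloid slightly tilted in the direction `e` and with
-- `a > k (b + M)` would touch `v + (M / 2) |·|²` from below in the slab around `x₁`.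
lemma ParaboloidSupersol.slope_le [ProperSpace E] (hΩv : ParaboloidSupersol k Ω v)
    (hv : LowerSemicontinuousOn v Ω) (hk : 0 < k) (hM : 0 < M) (hr : 0 < r) (hρ : 0 < ρ)
    (hρr : 100 * k * ρ ^ 2 < r ^ 2) {x₁ q e : E} (he : ‖e‖ = 1) (hball : closedBall x₁ r ⊆ Ω)
    (hq : IsSubgradientOn (convexShift M v) Ω x₁ q)
    (hm : ∀ y ∈ Ω, convexShift M v x₁ + ⟪q, y - x₁⟫_ℝ + m * (⟪e, y - x₁⟫_ℝ - ρ / 2) ≤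
      convexShift M v y) :
    m ≤ 17 / 16 * k * M * ρ := by
  by_contra! hlt
  set a := 33 / 32 * (k * M) with ha
  set u := convexShift M v
  let P := paraboloid x₁ (q + (a * ρ / 100) • e) e a (M / 64)
  let S := closedBall x₁ r ∩ {y | ⟪e, y - x₁⟫_ℝ ∈ Set.Icc (-(ρ / 50)) ρ}
  let U := ball x₁ r ∩ {y | ⟪e, y - x₁⟫_ℝ ∈ Set.Ioo (-(ρ / 50)) ρ}
  have hcont : Continuous fun y => ⟪e, y - x₁⟫_ℝ := by fun_prop
  have hS : IsCompact S := (isCompact_closedBall x₁ r).inter_right (isClosed_Icc.preimage hcont)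
  have hU : IsOpen U := isOpen_ball.inter (isOpen_Ioo.preimage hcont)
  have hUS : U ⊆ S :=
    Set.inter_subset_inter ball_subset_closedBall (Set.preimage_mono Set.Ioo_subset_Icc_self)
  have hSΩ : S ⊆ Ω := Set.inter_subset_left.trans hball
  have hx₁ : x₁ ∈ S := ⟨mem_closedBall_self hr.le, by simp; constructor <;> linarith⟩
  have hgap : ∀ y ∈ S \ U, u x₁ - P x₁ < u y - P y := by
    rintro y ⟨hyS, hyU⟩
    have hbdry : r ≤ ‖y - x₁‖ ∨ ⟪e, y - x₁⟫_ℝ ∉ Set.Ioo (-(ρ / 50)) ρ := by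
      rw [← dist_eq_norm, ← not_lt]
      exact not_and_or.mp hyU
    simpa only [P, paraboloid_self, sub_zero] using lt_sub_tilted_paraboloid hk hM hr hρ rfl hρr
      hlt.le he hyS.2 hbdry (hq y (hSΩ hyS)) (hm y (hSΩ hyS))
  obtain ⟨x₀, hx₀U, hmin⟩ := exists_isMinOn_mem_of_lowerSemicontinuousOn hS
    (lowerSemicontinuousOn_sub_of_continuousOn ((lowerSemicontinuousOn_convexShift hv M).mono hSΩ)
      (continuous_paraboloid ..).continuousOn) hx₁ hgap
  have hcontra := hΩv.le_of_isLocalMin_convexShift_sub (hSΩ (hUS hx₀U)) he (by positivity)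
    (hmin.isLocalMin (Filter.mem_of_superset (hU.mem_nhds hx₀U) hUS))
  nlinarith [mul_pos hk hM]

lemma ParaboloidSupersol.norm_subgradient_sub_le_of_norm_sub_le [ProperSpace E]
    (hΩv : ParaboloidSupersol k Ω v) (hv : LowerSemicontinuousOn v Ω) (hk : 0 < k) (hM : 0 < M)
    (hr : 0 < r) (hρ : 0 < ρ) (hρr : 100 * k * ρ ^ 2 < r ^ 2) {x₁ x₂ q₁ q₂ : E}
    (hx₁ : closedBall x₁ r ⊆ Ω) (hx₂ : closedBall x₂ r ⊆ Ω)
    (hq₁ : IsSubgradientOn (convexShift M v) Ω x₁ q₁)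
    (hq₂ : IsSubgradientOn (convexShift M v) Ω x₂ q₂) (hx : ‖x₁ - x₂‖ ≤ ρ) :
    ‖q₁ - q₂‖ ≤ 17 / 16 * k * M * ρ := by
  set u := convexShift M v
  wlog hu : u x₁ - ‖q₁ - q₂‖ * (ρ / 2) ≤ u x₂ + ⟪q₂, x₁ - x₂⟫_ℝ generalizing x₁ x₂ q₁ q₂
  · rw [norm_sub_rev]
    refine this hx₂ hx₁ (by rwa [norm_sub_rev]) hq₂ hq₁ ?_
    have hcs := (abs_le.mp (abs_real_inner_le_norm (q₁ - q₂) (x₁ - x₂))).2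
    have hρ' := mul_le_mul_of_nonneg_left hx (norm_nonneg (q₁ - q₂))
    rw [inner_sub_left] at hcs
    rw [norm_sub_rev, ← neg_sub x₁, inner_neg_right]
    linarith
  rcases eq_or_ne q₁ q₂ with rfl | hne
  · rw [sub_self, norm_zero]
    positivity
  have hm : ‖q₁ - q₂‖ ≠ 0 := norm_ne_zero_iff.mpr (sub_ne_zero.mpr hne)
  refine hΩv.slope_le (e := ‖q₁ - q₂‖⁻¹ • (q₂ - q₁)) hv hk hM hr hρ hρr ?_ hx₁ hq₁ fun y hy => ?_
  · rw [norm_smul, norm_inv, norm_norm, norm_sub_rev q₂, inv_mul_cancel₀ hm]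
  · have hy₂ := hq₂ y hy
    rw [← sub_add_sub_cancel y x₁ x₂, inner_add_right] at hy₂
    rw [real_inner_smul_left, mul_sub, mul_inv_cancel_left₀ hm, inner_sub_left]
    linarith

theorem ParaboloidSupersol.norm_subgradient_sub_le [ProperSpace E]
    (hΩv : ParaboloidSupersol k Ω v) (hv : LowerSemicontinuousOn v Ω) (hk : 0 < k) (hM : 0 < M)
    (hr : 0 < r) {x₁ x₂ q₁ q₂ : E} (hx : 100 * k * ‖x₁ - x₂‖ ^ 2 < r ^ 2)
    (hx₁ : closedBall x₁ r ⊆ Ω) (hx₂ : closedBall x₂ r ⊆ Ω)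
    (hq₁ : IsSubgradientOn (convexShift M v) Ω x₁ q₁)
    (hq₂ : IsSubgradientOn (convexShift M v) Ω x₂ q₂) :
    ‖q₁ - q₂‖ ≤ 17 / 16 * k * M * ‖x₁ - x₂‖ := by
  have hlim : Filter.Tendsto (fun ρ => 17 / 16 * k * M * ρ)
      (nhdsWithin ‖x₁ - x₂‖ (Set.Ioi ‖x₁ - x₂‖)) (nhds (17 / 16 * k * M * ‖x₁ - x₂‖)) :=
    (Continuous.tendsto (by fun_prop) _).mono_left nhdsWithin_le_nhds
  have hsmall : ∀ᶠ ρ in nhds ‖x₁ - x₂‖, 100 * k * ρ ^ 2 < r ^ 2 :=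
    ContinuousAt.eventually_lt (by fun_prop) continuousAt_const hx
  refine ge_of_tendsto hlim ?_
  filter_upwards [hsmall.filter_mono nhdsWithin_le_nhds, self_mem_nhdsWithin] with ρ hρr hρ
  exact hΩv.norm_subgradient_sub_le_of_norm_sub_le hv hk hM hr
    ((norm_nonneg _).trans_lt hρ) hρr hx₁ hx₂ hq₁ hq₂ (le_of_lt hρ)

end SubgradientEstimate

section Barrier

variable {E : Type*} [NormedAddCommGroup E] {Ω : Set E} {v : E → ℝ} {k γ A C c r R ε : ℝ}
  {x₀ : E}

lemma hasDerivAt_one_add_rpow {p s : ℝ} (hs : -1 < s) :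
    HasDerivAt (fun t : ℝ => (1 + t) ^ p) (p * (1 + s) ^ (p - 1)) s := by
  simpa using ((hasDerivAt_id s).const_add 1).rpow_const (p := p) (Or.inl (by simp; linarith))

lemma eventually_quadratic_le_one_add_rpow (hA : A < γ * (γ + 1)) :
    ∀ᶠ s in nhds (0 : ℝ), 1 - γ * s + A / 2 * s ^ 2 ≤ (1 + s) ^ (-γ) := by
  set g : ℝ → ℝ := fun s => (1 + s) ^ (-γ) - (1 - γ * s + A / 2 * s ^ 2)
  have hquad : ∀ s : ℝ, HasDerivAt (fun s => 1 - γ * s + A / 2 * s ^ 2) (-γ + A * s) s := fun s =>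
    ((((hasDerivAt_id s).const_mul γ).const_sub 1).add
      (((hasDerivAt_id s).pow 2).const_mul (A / 2))).congr_deriv (by simp; ring)
  have hg : ∀ s > -1, HasDerivAt g (-γ * (1 + s) ^ (-γ - 1) - (-γ + A * s)) s := fun s hs =>
    (hasDerivAt_one_add_rpow hs).sub (hquad s)
  have hderiv : deriv g =ᶠ[nhds 0] fun s => -γ * (1 + s) ^ (-γ - 1) - (-γ + A * s) :=
    (lt_mem_nhds neg_one_lt_zero).mono fun s hs => (hg s hs).deriv
  have hg' : HasDerivAt (deriv g) (γ * (γ + 1) - A) 0 := by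
    refine HasDerivAt.congr_of_eventuallyEq ?_ hderiv
    refine (((hasDerivAt_one_add_rpow neg_one_lt_zero).const_mul (-γ)).sub
      (((hasDerivAt_id 0).const_mul A).const_add (-γ))).congr_deriv ?_
    simp
    ring
  have hg0 := hg 0 neg_one_lt_zero
  have hmin : IsLocalMin g 0 :=
    isLocalMin_of_deriv_deriv_pos (by rw [hg'.deriv]; linarith) (by rw [hg0.deriv]; simp)
      hg0.continuousAt
  filter_upwards [hmin] with s hs
  simpa [g] using hs

lemma quadratic_le_mul_quadratic {d N : ℝ} (hr : 0 < r) (hA : 0 < A) (hC : 0 < C)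
    (hd : |d| ≤ r * N) (hNr : 4 * A * C * N ≤ ε * r) :
    -(2 * γ * C) * d + 4 * A * C / 2 * (r⁻¹ * d) ^ 2 - (2 * γ * C + ε) / 2 * N ^ 2 ≤
      C * r ^ 2 * (-γ * ((2 * d + N ^ 2) / r ^ 2) + A / 2 * ((2 * d + N ^ 2) / r ^ 2) ^ 2) := by
  have hcubic : -(r * N * N ^ 2) ≤ d * N ^ 2 := by
    rw [← neg_mul]
    gcongr
    exact (abs_le.mp hd).1
  have herr : 4 * A * C * N * (r * N ^ 2) ≤ ε * r * (r * N ^ 2) := by gcongr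
  have hquartic : 0 ≤ A * C * N ^ 4 := by positivity
  have hdN := mul_le_mul_of_nonneg_left hcubic (mul_pos hA hC).le
  rw [← sub_nonneg]
  have hsub : C * r ^ 2 * (-γ * ((2 * d + N ^ 2) / r ^ 2) + A / 2 * ((2 * d + N ^ 2) / r ^ 2) ^ 2) -
      (-(2 * γ * C) * d + 4 * A * C / 2 * (r⁻¹ * d) ^ 2 - (2 * γ * C + ε) / 2 * N ^ 2) =
      (4 * (A * C * (d * N ^ 2)) + A * C * N ^ 4 + ε * r ^ 2 * N ^ 2) / (2 * r ^ 2) := by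
    field_simp
    ring
  rw [hsub]
  exact div_nonneg (by linarith) (by positivity)

/-- The radial function `|x|^(-2γ)`, scaled so that it is at least `8 |x|²` on the ball of radius
`R`. -/
def radialBarrier (R γ : ℝ) (x : E) : ℝ := 8 * R ^ 2 * (R ^ 2 / ‖x‖ ^ 2) ^ γ

lemma radialBarrier_eq_mul_rpow (R γ : ℝ) (x : E) :
    radialBarrier R γ x = 8 * R ^ 2 * (R ^ 2) ^ γ * (‖x‖ ^ 2) ^ (-γ) := by
  rw [radialBarrier, Real.div_rpow (by positivity) (by positivity), Real.rpow_neg (by positivity)]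
  ring

lemma radialBarrier_nonneg (R γ : ℝ) (x : E) : 0 ≤ radialBarrier R γ x := by
  unfold radialBarrier
  positivity

lemma radialBarrier_lt_radialBarrier {x y : E} (hR : R ≠ 0) (hγ : 0 < γ) (hx : x ≠ 0)
    (hxy : ‖x‖ < ‖y‖) : radialBarrier R γ y < radialBarrier R γ x := by
  have := norm_pos_iff.mpr hx
  unfold radialBarrier
  gcongr

lemma continuousOn_radialBarrier (R : ℝ) (hγ : 0 ≤ γ) :
    ContinuousOn (radialBarrier R γ : E → ℝ) {0}ᶜ :=
  continuousOn_const.mul (ContinuousOn.rpow_const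
    (ContinuousOn.div (by fun_prop) (by fun_prop) fun _ hx => by simpa using hx)
    fun _ _ => Or.inr hγ)

variable [InnerProductSpace ℝ E]

lemma eventually_paraboloid_le_rpow (hx₀ : x₀ ≠ 0) (hA : 0 < A) (hAγ : A < γ * (γ + 1))
    (hε : 0 < ε) (hC : 0 < C) (hc : c * (‖x₀‖ ^ 2) ^ (-γ) = C * ‖x₀‖ ^ 2) :
    ∀ᶠ x in nhds x₀, paraboloid x₀ (-(2 * γ * C) • x₀) (‖x₀‖⁻¹ • x₀) (4 * A * C) (2 * γ * C + ε) x
      ≤ c * (‖x‖ ^ 2) ^ (-γ) - c * (‖x₀‖ ^ 2) ^ (-γ) := by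
  have hr : 0 < ‖x₀‖ := norm_pos_iff.mpr hx₀
  let s : E → ℝ := fun x => (2 * ⟪x₀, x - x₀⟫_ℝ + ‖x - x₀‖ ^ 2) / ‖x₀‖ ^ 2
  have hs : Filter.Tendsto s (nhds x₀) (nhds 0) := by
    simpa [s] using Continuous.tendsto (f := s) (by fun_prop) x₀
  have hnear : ∀ᶠ x in nhds x₀, 4 * A * C * ‖x - x₀‖ < ε * ‖x₀‖ :=
    ContinuousAt.eventually_lt (by fun_prop) continuousAt_const
      (by simpa using mul_pos hε hr)
  filter_upwards [hs.eventually (eventually_quadratic_le_one_add_rpow hAγ), hnear] with x hsx hxr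
  have hnorm : ‖x‖ ^ 2 = ‖x₀‖ ^ 2 * (1 + s x) := by
    have h := norm_add_sq_real x₀ (x - x₀)
    rw [add_sub_cancel] at h
    rw [h]
    simp only [s]
    field_simp
    ring
  have h1s : 0 ≤ 1 + s x := nonneg_of_mul_nonneg_right (hnorm ▸ sq_nonneg ‖x‖) (by positivity)
  rw [hc, hnorm, Real.mul_rpow (by positivity) h1s, ← mul_assoc, hc]
  have hpara := quadratic_le_mul_quadratic (γ := γ) hr hA hC
    (abs_real_inner_le_norm x₀ (x - x₀)) hxr.le
  have hrpow := mul_le_mul_of_nonneg_left hsx (by positivity : 0 ≤ C * ‖x₀‖ ^ 2)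
  rw [paraboloid, real_inner_smul_left, real_inner_smul_left]
  linarith

-- `k ≤ γ + 2` makes `|x|^(-2γ)` a strict subsolution, and `8 ≤ C` absorbs the shift by `|·|² / 2`.
lemma ParaboloidSupersol.not_isLocalMin_sub_barrier (hΩv : ParaboloidSupersol k Ω v) (hγ : 1 ≤ γ)
    (hk : k ≤ γ + 2) {q z : E} (hx₀Ω : x₀ ∈ Ω) (hx₀ : x₀ ≠ 0) (hC : 8 ≤ C)
    (hc : c * (‖x₀‖ ^ 2) ^ (-γ) = C * ‖x₀‖ ^ 2) :
    ¬ IsLocalMin (fun x => convexShift 1 v x - (⟪q, x - z⟫_ℝ + c * (‖x‖ ^ 2) ^ (-γ))) x₀ := by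
  intro hmin
  have he : ‖‖x₀‖⁻¹ • x₀‖ = 1 := norm_smul_inv_norm (𝕜 := ℝ) hx₀
  have hpara := eventually_paraboloid_le_rpow (A := γ ^ 2 + 3 / 4 * γ) hx₀ (by positivity)
    (by linarith) one_pos (by linarith) hc
  have htouch : IsLocalMin (fun x => convexShift 1 v x -
      paraboloid x₀ (q + -(2 * γ * C) • x₀) (‖x₀‖⁻¹ • x₀) (4 * (γ ^ 2 + 3 / 4 * γ) * C)
        (2 * γ * C + 1) x) x₀ := by
    filter_upwards [hmin, hpara] with x hx hPx
    rw [paraboloid_self]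
    rw [paraboloid] at hPx ⊢
    rw [← sub_add_sub_cancel x x₀ z, inner_add_right] at hx
    rw [inner_add_left]
    linarith
  have hcontra := hΩv.le_of_isLocalMin_convexShift_sub hx₀Ω he (by positivity) htouch
  have hkγ : k * (2 * γ * C + 1 + 1) ≤ (γ + 2) * (2 * γ * C + 1 + 1) := by gcongr
  have hγC : 0 ≤ (γ - 1) * γ * C := by
    have := sub_nonneg.mpr hγ
    positivity
  have hγ8 : γ * 8 ≤ γ * C := by gcongr
  nlinarith

lemma ParaboloidSupersol.not_isLocalMin_sub_radialBarrier (hΩv : ParaboloidSupersol k Ω v)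
    (hγ : 1 ≤ γ) (hk : k ≤ γ + 2) {q z : E} (hx₀Ω : x₀ ∈ Ω) (hx₀ : x₀ ≠ 0) (hR : ‖x₀‖ ≤ R) :
    ¬ IsLocalMin (fun x => convexShift 1 v x - (⟪q, x - z⟫_ℝ + radialBarrier R γ x)) x₀ := by
  simp only [radialBarrier_eq_mul_rpow]
  have := norm_pos_iff.mpr hx₀
  have hratio : 1 ≤ R ^ 2 / ‖x₀‖ ^ 2 := (one_le_div (by positivity)).mpr (by gcongr)
  refine hΩv.not_isLocalMin_sub_barrier (C := 8 * (R ^ 2 / ‖x₀‖ ^ 2 * (R ^ 2 / ‖x₀‖ ^ 2) ^ γ))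
    hγ hk hx₀Ω hx₀ ?_ ?_
  · have := one_le_mul_of_one_le_of_one_le hratio (Real.one_le_rpow hratio (by linarith : 0 ≤ γ))
    linarith
  · rw [← radialBarrier_eq_mul_rpow, radialBarrier]
    field_simp

theorem ParaboloidSupersol.exists_low_point [ProperSpace E] (hΩv : ParaboloidSupersol k Ω v)
    (hv : LowerSemicontinuousOn v Ω) (hγ : 1 ≤ γ) (hk : k ≤ γ + 2) (hR : closedBall 0 R ⊆ Ω)
    (hr : 0 < r) {z q : E} (hz : ‖z‖ < R) (hq : IsSubgradientOn (convexShift 1 v) Ω z q) :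
    ∃ x, ‖x‖ ≤ r ∧ convexShift 1 v x ≤
      convexShift 1 v z + ⟪q, x - z⟫_ℝ + 8 * R ^ 2 * (R ^ 2 / r ^ 2) ^ γ := by
  rcases le_or_gt ‖z‖ r with hzr | hrz
  · refine ⟨z, hzr, ?_⟩
    rw [sub_self, inner_zero_right, add_zero, le_add_iff_nonneg_right]
    positivity
  by_contra! hhigh
  have hR0 : 0 < R := hr.trans (hrz.trans hz)
  have hz0 : z ≠ 0 := norm_pos_iff.mp (hr.trans hrz)
  let w : E → ℝ := fun x => ⟪q, x - z⟫_ℝ + radialBarrier R γ x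
  let S : Set E := {x | ‖x‖ ∈ Set.Icc r R}
  let U : Set E := {x | ‖x‖ ∈ Set.Ioo r R}
  have hUS : U ⊆ S := Set.preimage_mono Set.Ioo_subset_Icc_self
  have hSR : S ⊆ closedBall 0 R := fun x hx => mem_closedBall_zero_iff.mpr hx.2
  have hS : IsCompact S :=
    (isCompact_closedBall 0 R).of_isClosed_subset (isClosed_Icc.preimage continuous_norm) hSR
  have hw : ContinuousOn w S := ContinuousOn.add (by fun_prop)
    ((continuousOn_radialBarrier R (by linarith)).mono fun x hx =>
      norm_pos_iff.mp (hr.trans_le hx.1))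
  have hgap : ∀ y ∈ S \ U, convexShift 1 v z - w z < convexShift 1 v y - w y := by
    rintro y ⟨hyS, hyU⟩
    simp only [w, sub_self, inner_zero_right, zero_add]
    rcases hyS.1.eq_or_lt with hy | hy
    · have hyr := hhigh y hy.ge
      rw [hy, ← radialBarrier] at hyr
      linarith [radialBarrier_nonneg R γ z]
    · have hyR : ‖y‖ = R := hyS.2.eq_or_lt.resolve_right fun h => hyU ⟨hy, h⟩
      linarith [hq y (hR (hSR hyS)), radialBarrier_lt_radialBarrier hR0.ne'
        (one_pos.trans_le hγ) hz0 (hz.trans_eq hyR.symm)]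
  obtain ⟨x₀, hx₀U, hmin⟩ := exists_isMinOn_mem_of_lowerSemicontinuousOn hS
    (lowerSemicontinuousOn_sub_of_continuousOn
      ((lowerSemicontinuousOn_convexShift hv 1).mono (hSR.trans hR)) hw) ⟨hrz.le, hz.le⟩ hgap
  have hU : IsOpen U := isOpen_Ioo.preimage continuous_norm
  exact hΩv.not_isLocalMin_sub_radialBarrier hγ hk (hR (hSR (hUS hx₀U)))
    (norm_pos_iff.mp (hr.trans hx₀U.1)) hx₀U.2.le
    (hmin.isLocalMin (Filter.mem_of_superset (hU.mem_nhds hx₀U) hUS))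

end Barrier

section Contact

variable {E : Type*} [NormedAddCommGroup E] [InnerProductSpace ℝ E] {Ω : Set E} {u v : E → ℝ}
  {k K H M R γ : ℝ} {x y z q q₀ xb : E}

lemma norm_sub_sq_add_le_norm_sub_sq (hx : 1 / 2 ≤ ‖x‖) (hz : ‖z‖ ≤ 1 / 4)
    (hy : ‖y - (1 / 2 : ℝ) • z‖ ≤ 9 / 64) : ‖z - y‖ ^ 2 + 1 / 20 ≤ ‖x - y‖ ^ 2 := by
  set w := (1 / 2 : ℝ) • z
  have hw : ‖w‖ ≤ 1 / 8 := by
    rw [norm_smul, Real.norm_of_nonneg (by norm_num)]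
    linarith
  have hsum : w + (y - w) = y := add_sub_cancel w y
  have hdiff : w - (y - w) = z - y := by
    rw [← sub_add, sub_add_eq_add_sub, ← add_smul, add_halves, one_smul]
  have hpar : ‖y‖ ^ 2 + ‖z - y‖ ^ 2 ≤ 2 * ((1 / 8) ^ 2 + (9 / 64) ^ 2) := by
    have h := parallelogram_law_with_norm ℝ w (y - w)
    rw [hsum, hdiff] at h
    rw [h]
    gcongr
  have hxy : 1 / 2 - ‖y‖ ≤ ‖x - y‖ := by linarith [norm_sub_norm_le x y]
  have hy' : ‖y‖ ≤ 1 / 2 := by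
    have := norm_add_le w (y - w)
    rw [hsum] at this
    linarith
  have hsq : (1 / 2 - ‖y‖) ^ 2 ≤ ‖x - y‖ ^ 2 := by gcongr
  linarith [sq_nonneg (‖y‖ - 1 / 4)]

lemma convexShift_sub_inner_add_smul (K : ℝ) (u : E → ℝ) (q₀ y x : E) :
    convexShift K u x - ⟪q₀ + K • y, x⟫_ℝ =
      u x - ⟪q₀, x⟫_ℝ + K / 2 * ‖x - y‖ ^ 2 - K / 2 * ‖y‖ ^ 2 := by
  rw [convexShift, inner_add_left, real_inner_smul_left, norm_sub_sq_real, real_inner_comm x y]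
  ring

-- With `q = q₀ + K • y`, the point `y` is near `z / 2`, so `u - ⟪q₀, ·⟫ + (K / 2) |· - y|²` is
-- smaller at the low point `z` than outside the ball of radius `1 / 2`.
theorem exists_isSubgradientOn_convexShift_of_low_point [ProperSpace E]
    (hu : LowerSemicontinuousOn u Ω) (hΩ : closedBall 0 (1 / 2) ⊆ Ω)
    (hxb : IsSubgradientOn u Ω xb q₀) (hz : ‖z‖ ≤ 1 / 4)
    (hlow : u z ≤ u xb + ⟪q₀, z - xb⟫_ℝ + H) (hHK : 40 * H < K)
    (hq : q ∈ ball (q₀ + (K / 2) • z) (9 / 64 * K)) :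
    ∃ x ∈ ball 0 (1 / 2), IsSubgradientOn (convexShift K u) Ω x q := by
  have hzball : z ∈ closedBall 0 (1 / 2) := mem_closedBall_zero_iff.mpr (by linarith)
  have hK : 0 < K := by linarith [hxb z (hΩ hzball)]
  obtain ⟨y, rfl⟩ : ∃ y, q = q₀ + K • y := ⟨K⁻¹ • (q - q₀), by simp [hK.ne']⟩
  have hy : ‖y - (1 / 2 : ℝ) • z‖ ≤ 9 / 64 := by
    have hsub : q₀ + K • y - (q₀ + (K / 2) • z) = K • (y - (1 / 2 : ℝ) • z) := by module
    rw [mem_ball, dist_eq_norm, hsub, norm_smul, Real.norm_of_nonneg hK.le, mul_comm] at hq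
    exact (lt_of_mul_lt_mul_right hq hK.le).le
  let F : E → ℝ := fun x => convexShift K u x - ⟪q₀ + K • y, x⟫_ℝ
  have hout : ∀ x ∈ Ω, 1 / 2 ≤ ‖x‖ → F z < F x := by
    intro x hxΩ hx
    simp only [F, convexShift_sub_inner_add_smul]
    have hvertex : K / 2 * (‖z - y‖ ^ 2 + 1 / 20) ≤ K / 2 * ‖x - y‖ ^ 2 := by
      gcongr
      exact norm_sub_sq_add_le_norm_sub_sq hx hz hy
    have hqx := hxb x hxΩ
    rw [inner_sub_right] at hqx hlow
    linarith
  have hF : LowerSemicontinuousOn F (closedBall 0 (1 / 2)) :=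
    lowerSemicontinuousOn_sub_of_continuousOn ((lowerSemicontinuousOn_convexShift hu K).mono hΩ)
      (by fun_prop)
  obtain ⟨x, hx, hmin⟩ := exists_isMinOn_mem_of_lowerSemicontinuousOn (s := ball 0 (1 / 2))
    (isCompact_closedBall 0 (1 / 2)) hF hzball fun x hx =>
      hout x (hΩ hx.1) (by simpa using hx.2)
  refine ⟨x, hx, fun w hw => ?_⟩
  have hle : F x ≤ F w := by
    rcases le_or_gt ‖w‖ (1 / 2) with hw' | hw'
    · exact hmin (mem_closedBall_zero_iff.mpr hw')
    · exact (hmin hzball).trans (hout w hw hw'.le).le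
  simp only [F] at hle
  rw [inner_sub_right]
  linarith

lemma ParaboloidSupersol.exists_ball_subset_slopes [ProperSpace E]
    (hΩv : ParaboloidSupersol k Ω v) (hv : LowerSemicontinuousOn v Ω) (hγ : 1 ≤ γ)
    (hkγ : k ≤ γ + 2) (hR : 1 / 2 ≤ R) (hΩ : closedBall 0 R ⊆ Ω)
    (hne : ∃ x ∈ ball 0 R, ∃ q, IsSubgradientOn (convexShift 1 v) Ω x q)
    (hM : 40 * (8 * R ^ 2 * (16 * R ^ 2) ^ γ) + 1 < M) :
    ∃ c : E, ∀ q ∈ ball c (9 / 64 * (M - 1)),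
      ∃ x ∈ ball 0 (1 / 2), IsSubgradientOn (convexShift M v) Ω x q := by
  obtain ⟨xb, hxb, q₀, hq₀⟩ := hne
  obtain ⟨z, hz, hlow⟩ := hΩv.exists_low_point hv hγ hkγ hΩ (r := 1 / 4) (by norm_num)
    (mem_ball_zero_iff.mp hxb) hq₀
  have hbase : R ^ 2 / (1 / 4) ^ 2 = 16 * R ^ 2 := by ring
  rw [hbase] at hlow
  refine ⟨q₀ + ((M - 1) / 2) • z, fun q hq => ?_⟩
  have hcontact := exists_isSubgradientOn_convexShift_of_low_point
    (lowerSemicontinuousOn_convexShift hv 1) ((closedBall_subset_closedBall hR).trans hΩ) hq₀ hz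
    hlow (lt_sub_iff_add_lt.mpr hM) hq
  rwa [convexShift_convexShift, add_sub_cancel] at hcontact

end Contact

section Measure

open Module Measure

variable {E : Type*} [NormedAddCommGroup E] [NormedSpace ℝ E] [FiniteDimensional ℝ E]
  [MeasurableSpace E] [BorelSpace E] (μ : Measure E) [μ.IsAddHaarMeasure] {s : Set E} {g : E → E}
  {K : NNReal} {ρ : ℝ}

lemma measure_le_measure_image_of_antilipschitzWith_domRestrict
    (hg : AntilipschitzWith K (s.domRestrict g)) :
    μ s ≤ (K : ℝ≥0∞) ^ finrank ℝ E * μ (g '' s) := by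
  have hd : (0 : ℝ) ≤ finrank ℝ E := Nat.cast_nonneg _
  have h := hg.le_hausdorffMeasure_image hd Set.univ
  rw [← isometry_subtype_coe.hausdorffMeasure_image (Or.inl hd), Set.image_univ,
    Subtype.range_coe, Set.image_univ, Set.range_domRestrict, ENNReal.rpow_natCast] at h
  rw [isAddLeftInvariant_eq_smul μ μH[finrank ℝ E], Measure.smul_apply, Measure.smul_apply,
    mul_smul_comm]
  gcongr

lemma exists_measurable_partition_dist_lt {X : Type*} [PseudoMetricSpace X]
    [TopologicalSpace.SeparableSpace X] [Nonempty X] [MeasurableSpace X] [OpensMeasurableSpace X]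
    (hρ : 0 < ρ) :
    ∃ P : ℕ → Set X, (∀ i, MeasurableSet (P i)) ∧ Pairwise (Function.onFun Disjoint P) ∧
      ⋃ i, P i = Set.univ ∧ ∀ i, ∀ x ∈ P i, ∀ y ∈ P i, dist x y < ρ := by
  let c := TopologicalSpace.denseSeq X
  refine ⟨disjointed fun i => ball (c i) (ρ / 2),
    fun i => MeasurableSet.disjointed (fun _ => measurableSet_ball) i, disjoint_disjointed _,
    ?_, fun i x hx y hy => ?_⟩
  · rw [iUnion_disjointed]
    refine Set.iUnion_eq_univ_iff.mpr fun x => ?_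
    exact (TopologicalSpace.denseRange_denseSeq X).exists_dist_lt x (half_pos hρ)
  · have hsub := disjointed_subset (fun i => ball (c i) (ρ / 2)) i
    linarith [dist_triangle_right x y (c i), mem_ball.mp (hsub hx), mem_ball.mp (hsub hy)]

theorem measure_le_measure_image_of_locally_antilipschitz (hρ : 0 < ρ)
    (hg : ∀ a ∈ s, ∀ b ∈ s, dist (g a) (g b) < ρ → dist a b ≤ K * dist (g a) (g b)) :
    μ s ≤ (K : ℝ≥0∞) ^ finrank ℝ E * μ (g '' s) := by
  obtain ⟨P, hPmeas, hPdisj, hPunion, hPdist⟩ := exists_measurable_partition_dist_lt (X := E) hρ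
  have hpiece : ∀ i, μ (s ∩ g ⁻¹' P i) ≤ (K : ℝ≥0∞) ^ finrank ℝ E * μ (P i ∩ g '' s) := by
    intro i
    have hanti : AntilipschitzWith K ((s ∩ g ⁻¹' P i).domRestrict g) :=
      AntilipschitzWith.of_le_mul_dist fun a b =>
        hg a a.2.1 b b.2.1 (hPdist i _ a.2.2 _ b.2.2)
    refine (measure_le_measure_image_of_antilipschitzWith_domRestrict μ hanti).trans ?_
    rw [Set.image_inter_preimage, Set.inter_comm]
  calc μ s = μ (⋃ i, s ∩ g ⁻¹' P i) := by
        rw [← Set.inter_iUnion, ← Set.preimage_iUnion, hPunion, Set.preimage_univ, Set.inter_univ]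
    _ ≤ ∑' i, μ (s ∩ g ⁻¹' P i) := measure_iUnion_le _
    _ ≤ ∑' i, (K : ℝ≥0∞) ^ finrank ℝ E * μ (P i ∩ g '' s) := ENNReal.tsum_le_tsum hpiece
    _ = (K : ℝ≥0∞) ^ finrank ℝ E * ∑' i, μ.restrict (g '' s) (P i) := by
        simp only [ENNReal.tsum_mul_left, restrict_apply (hPmeas _)]
    _ = (K : ℝ≥0∞) ^ finrank ℝ E * μ (g '' s) := by
        rw [← measure_iUnion hPdisj hPmeas, hPunion, restrict_apply_univ]

end Measure

section Cubes

variable {n : ℕ}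

lemma volume_cube (s : ℝ) (c : Euc n) : volume (cube s c) = ENNReal.ofReal s ^ n := by
  have hpre : cube s c = WithLp.ofLp ⁻¹'
      Set.univ.pi fun i => Set.Ioo (c i - s / 2) (c i + s / 2) := by
    ext y
    simp [cube, abs_sub_lt_iff, sub_lt_iff_lt_add, add_comm, and_comm]
  rw [hpre, (PiLp.volume_preserving_ofLp (Fin n)).measure_preimage
    (MeasurableSet.univ_pi fun _ => measurableSet_Ioo).nullMeasurableSet, Real.volume_pi_Ioo]
  simp

lemma cube_subset_ball (hn : n ≠ 0) (s : ℝ) (c : Euc n) :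
    cube s c ⊆ ball c (s / 2 * √n) := by
  intro y hy
  have : NeZero n := ⟨hn⟩
  have hs : 0 < s / 2 := (abs_nonneg _).trans_lt (hy 0)
  rw [mem_ball, dist_eq_norm, ← sq_lt_sq₀ (norm_nonneg _) (by positivity), mul_pow,
    Real.sq_sqrt n.cast_nonneg, EuclideanSpace.real_norm_sq_eq]
  calc ∑ i, (y - c) i ^ 2 < ∑ _i : Fin n, (s / 2) ^ 2 :=
        Finset.sum_lt_sum_of_nonempty Finset.univ_nonempty fun i _ =>
          sq_lt_sq' (abs_lt.mp (hy i)).1 (abs_lt.mp (hy i)).2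
    _ = (s / 2) ^ 2 * n := by simp [mul_comm]

lemma ball_subset_cube (s : ℝ) (c : Euc n) : ball c (s / 2) ⊆ cube s c := by
  intro y hy i
  rw [mem_ball, dist_eq_norm] at hy
  exact (PiLp.norm_apply_le (y - c) i).trans_lt hy

end Cubes

section ContactSet

open Module Measure

variable {E : Type*} [NormedAddCommGroup E] [InnerProductSpace ℝ E] [FiniteDimensional ℝ E]
  [MeasurableSpace E] [BorelSpace E] (μ : Measure E) [μ.IsAddHaarMeasure] {Ω S Y : Set E}
  {v : E → ℝ} {k M r R γ : ℝ}

theorem ParaboloidSupersol.measure_le_of_forall_exists_isSubgradientOn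
    (hΩv : ParaboloidSupersol k Ω v) (hv : LowerSemicontinuousOn v Ω) (hk : 0 < k) (hM : 0 < M)
    (hr : 0 < r) (hS : ∀ x ∈ S, closedBall x r ⊆ Ω)
    (hY : ∀ q ∈ Y, ∃ x ∈ S, IsSubgradientOn (convexShift M v) Ω x q) :
    μ Y ≤ ENNReal.ofReal (17 / 16 * k * M) ^ finrank ℝ E * μ S := by
  choose! g hgS hg using hY
  have hL : 0 ≤ 17 / 16 * k * M := by positivity
  have hρ : 0 < √(r ^ 2 / (100 * k)) := by positivity
  have hinj : ∀ a ∈ Y, ∀ b ∈ Y, dist (g a) (g b) < √(r ^ 2 / (100 * k)) →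
      dist a b ≤ (17 / 16 * k * M).toNNReal * dist (g a) (g b) := by
    intro a ha b hb hab
    rw [Real.lt_sqrt dist_nonneg, lt_div_iff₀' (by positivity), dist_eq_norm] at hab
    rw [Real.coe_toNNReal _ hL, dist_eq_norm, dist_eq_norm]
    exact hΩv.norm_subgradient_sub_le hv hk hM hr hab (hS _ (hgS a ha)) (hS _ (hgS b hb))
      (hg a ha) (hg b hb)
  refine (measure_le_measure_image_of_locally_antilipschitz μ hρ hinj).trans ?_
  rw [ENNReal.ofReal]
  gcongr
  exact Set.image_subset_iff.mpr hgS

theorem ParaboloidSupersol.measure_ball_le_measure_contact (hΩv : ParaboloidSupersol k Ω v)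
    (hv : LowerSemicontinuousOn v Ω) (hk : 0 < k) (hγ : 1 ≤ γ) (hkγ : k ≤ γ + 2)
    (hR : 3 / 2 ≤ R) (hΩ : closedBall 0 R ⊆ Ω)
    (hne : ∃ x ∈ ball 0 R, ∃ q, IsSubgradientOn (convexShift 1 v) Ω x q)
    (hM : 40 * (8 * R ^ 2 * (16 * R ^ 2) ^ γ) + 1 < M) :
    μ (ball 0 (1 / (8 * k))) ≤
      μ {x ∈ ball 0 (1 / 2) | ∃ q, IsSubgradientOn (convexShift M v) Ω x q} := by
  obtain ⟨c, hc⟩ := hΩv.exists_ball_subset_slopes hv hγ hkγ (by linarith) hΩ hne hM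
  have hR2 : (3 / 2) ^ 2 ≤ R ^ 2 := by gcongr
  have hpow : 1 ≤ (16 * R ^ 2) ^ γ := Real.one_le_rpow (by linarith) (by linarith)
  have hM18 : 18 ≤ M := by nlinarith
  have hL : 0 < 17 / 16 * k * M := by positivity
  have hradius : 17 / 16 * k * M * (1 / (8 * k)) ≤ 9 / 64 * (M - 1) := by
    field_simp
    linarith
  have hL0 : ENNReal.ofReal (17 / 16 * k * M) ^ finrank ℝ E ≠ 0 :=
    pow_ne_zero _ (ENNReal.ofReal_pos.mpr hL).ne'
  rw [← ENNReal.mul_le_mul_iff_right hL0 (ENNReal.pow_ne_top ENNReal.ofReal_ne_top),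
    ← ENNReal.ofReal_pow hL.le, ← addHaar_ball_mul_of_pos μ c hL, ENNReal.ofReal_pow hL.le]
  refine hΩv.measure_le_of_forall_exists_isSubgradientOn μ hv hk (by linarith) one_pos
    (fun x hx => (closedBall_subset_closedBall' ?_).trans hΩ) fun q hq => ?_
  · linarith [mem_ball.mp hx.1]
  · obtain ⟨x, hx, hqx⟩ := hc q (ball_subset_ball hradius hq)
    exact ⟨x, ⟨hx, q, hqx⟩, hqx⟩

end ContactSet

section MainEstimate

variable {n : ℕ} {lam Lam M : ℝ}

theorem stmt_9_general (hn : n ≠ 0) (hlam : 0 < lam) (hLam : lam ≤ Lam) {Ω : Set (Euc n)}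
    {v : Euc n → ℝ} (hB : closedBall 0 (3 / 2 * √n) ⊆ Ω) (hv : LowerSemicontinuousOn v Ω)
    (hsuper : ViscSupersol lam Lam Ω v) (hne : (Gm 1 v Ω ∩ cube 3 0).Nonempty)
    (hM : 720 * n * (36 * n) ^ max 1 (((n : ℝ) - 1) * Lam / lam - 1) + 1 < M) :
    ENNReal.ofReal ((lam / (lam + ((n : ℝ) - 1) * Lam)) ^ n * (1 / (4 * √n)) ^ n) *
      volume (cube 1 (0 : Euc n)) ≤ volume (Gm M v Ω ∩ ball 0 (1 / 2)) := by
  have hn1 : (1 : ℝ) ≤ n := mod_cast Nat.one_le_iff_ne_zero.mpr hn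
  have hsqrt : 1 ≤ √(n : ℝ) := Real.one_le_sqrt.mpr hn1
  have hden : 0 < lam + ((n : ℝ) - 1) * Lam :=
    add_pos_of_pos_of_nonneg hlam (mul_nonneg (by linarith) (hlam.le.trans hLam))
  set k := (lam + ((n : ℝ) - 1) * Lam) / lam with hk
  have hkγ : k ≤ max 1 (((n : ℝ) - 1) * Lam / lam - 1) + 2 := by
    rw [hk, add_div, div_self hlam.ne']
    linarith [le_max_right 1 (((n : ℝ) - 1) * Lam / lam - 1)]
  have hR : (3 / 2 * √n) ^ 2 = 9 / 4 * n := by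
    rw [mul_pow, Real.sq_sqrt n.cast_nonneg]
    norm_num
  obtain ⟨xb, hxb, hxb3⟩ := hne
  have hcontact := (hsuper.paraboloidSupersol hn hlam hLam).measure_ball_le_measure_contact
    volume hv (div_pos hden hlam) (le_max_left _ _) hkγ (by linarith) hB
    ⟨xb, cube_subset_ball hn 3 0 hxb3, (mem_Gm_iff.mp hxb).2⟩ (M := M)
    (by rw [hR]; convert hM using 2; ring_nf)
  calc ENNReal.ofReal ((lam / (lam + ((n : ℝ) - 1) * Lam)) ^ n * (1 / (4 * √n)) ^ n) *
        volume (cube 1 (0 : Euc n)) =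
          volume (cube (lam / (lam + ((n : ℝ) - 1) * Lam) * (1 / (4 * √n))) (0 : Euc n)) := by
        rw [volume_cube, volume_cube, ← mul_pow, ENNReal.ofReal_pow (by positivity),
          ENNReal.ofReal_one, one_pow, mul_one]
    _ ≤ volume (ball (0 : Euc n) (1 / (8 * k))) := by
        refine measure_mono ((cube_subset_ball hn _ _).trans (ball_subset_ball (le_of_eq ?_)))
        rw [hk]
        field_simp
        norm_num
    _ ≤ volume {x ∈ ball 0 (1 / 2) | ∃ q, IsSubgradientOn (convexShift M v) Ω x q} := hcontact
    _ ≤ volume (Gm M v Ω ∩ ball 0 (1 / 2)) := measure_mono fun x hx =>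
        ⟨mem_Gm_iff.mpr ⟨hB (ball_subset_closedBall (ball_subset_ball (by linarith) hx.1)), hx.2⟩,
          hx.1⟩

lemma mul_rpow_add_one_lt (hn : 2 ≤ n) {γ : ℝ} (hγ : 0 ≤ γ) :
    720 * n * (36 * n) ^ γ + 1 < 884736 * (n : ℝ) ^ 3 * (36 * n) ^ γ := by
  have hn1 : (1 : ℝ) ≤ n := mod_cast (by lia : 1 ≤ n)
  have hpow : 1 ≤ (36 * (n : ℝ)) ^ γ := Real.one_le_rpow (by linarith) hγ
  have hcube : (n : ℝ) ≤ n ^ 3 := le_self_pow₀ hn1 (by norm_num)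
  have hle : n * (36 * (n : ℝ)) ^ γ ≤ n ^ 3 * (36 * n) ^ γ := by gcongr
  linarith [one_le_mul_of_one_le_of_one_le hn1 hpow]

end MainEstimate

/-- measure and localization estimate with explicit constants σ and M. -/
theorem stmt_9 (n : ℕ) (hn : 2 ≤ n) (lam Lam : ℝ) (hlam : 0 < lam) (hLam : lam ≤ Lam)
    (Ω : Set (Euc n)) (hΩ : IsOpen Ω) (hB : closedBall 0 (2 * Real.sqrt n) ⊆ Ω)
    (v : Euc n → ℝ) (hv : ContinuousOn v Ω) (hsuper : ViscSupersol lam Lam Ω v)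
    (hne : (Gm 1 v Ω ∩ cube 3 0).Nonempty) :
    ENNReal.ofReal
        (1 - (1 - (lam / (lam + ((n : ℝ) - 1) * Lam)) ^ n * (1 / (4 * Real.sqrt n)) ^ n)) *
        volume (cube (1 : ℝ) (0 : Euc n)) ≤
      volume (Gm (884736 * (n : ℝ) ^ 3 *
        (36 * (n : ℝ)) ^ (max (1 : ℝ) (((n : ℝ) - 1) * Lam / lam - 1))) v Ω ∩ cube 1 0) := by
  have hB' : closedBall 0 (3 / 2 * √n) ⊆ Ω :=
    (closedBall_subset_closedBall (by gcongr; norm_num)).trans hB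
  rw [sub_sub_cancel]
  exact (stmt_9_general (by lia) hlam hLam hB' hv.lowerSemicontinuousOn hsuper hne
    (mul_rpow_add_one_lt hn (zero_le_one.trans (le_max_left _ _)))).trans
    (measure_mono (Set.inter_subset_inter_right _ (ball_subset_cube 1 0)))
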